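/- Let (ρ, X) be a strict positive A–B-correspondence and (φ, Y) a nondegenerate B–C-correspondence. Then the map ρ ⊗ Id : A → End_C(X ⊗_B Y) given by (ρ⊗Id)(a)(x ⊗ y) = ρ(a)x ⊗ y is a well-defined strict completely positive map, and there is an isomorphism of A–C-correspondences (A ⊗_ρ X) ⊗_B Y ≅ A ⊗_{ρ⊗Id} (X ⊗_B Y) intertwining the left A-actions. -/

import Mathlib

noncomputable section

open Filter Topology

universe u

/-- A bundled right Hilbert C*-module structure over a (possibly non-unital)
C*-algebra `B` on a complete normed complex vector space `X`.  The fields record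
the right `B`-action, the `B`-valued inner product, and their standard axioms,
including positivity of inner products and compatibility of the norm. -/
structure HilbertModule (B : Type u) (X : Type u)
    [NonUnitalCStarAlgebra B] [NormedAddCommGroup X] [NormedSpace ℂ X] [CompleteSpace X] :
    Type u where
  smulR : X → B → X
  inner : X → X → B
  smulR_add : ∀ (x : X) (b c : B), smulR x (b + c) = smulR x b + smulR x c
  add_smulR : ∀ (x y : X) (b : B), smulR (x + y) b = smulR x b + smulR y b
  smulR_mul : ∀ (x : X) (b c : B), smulR x (b * c) = smulR (smulR x b) c
  smulC_smulR : ∀ (c : ℂ) (x : X) (b : B), smulR (c • x) b = c • smulR x b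
  inner_add_left : ∀ x y z : X, inner (x + y) z = inner x z + inner y z
  inner_add_right : ∀ x y z : X, inner x (y + z) = inner x y + inner x z
  inner_smulR_right : ∀ (x y : X) (b : B), inner x (smulR y b) = inner x y * b
  inner_smulC_right : ∀ (c : ℂ) (x y : X), inner x (c • y) = c • inner x y
  star_inner : ∀ x y : X, star (inner x y) = inner y x
  inner_self_pos : ∀ x : X, ∃ b : B, inner x x = star b * b
  norm_inner_self : ∀ x : X, ‖x‖ ^ 2 = ‖inner x x‖

/-- `T : X → Y` and `S : Y → X` are mutually adjoint operators between
right Hilbert `B`-modules. -/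
def HilbertModule.IsAdjointPair {B X Y : Type u} [NonUnitalCStarAlgebra B]
    [NormedAddCommGroup X] [NormedSpace ℂ X] [CompleteSpace X]
    [NormedAddCommGroup Y] [NormedSpace ℂ Y] [CompleteSpace Y]
    (hX : HilbertModule B X) (hY : HilbertModule B Y)
    (T : X → Y) (S : Y → X) : Prop :=
  ∀ (x : X) (y : Y), hY.inner (T x) y = hX.inner x (S y)

/-- Positivity in a C*-algebra, expressed as being of the form `star c * c`. -/
def IsPositiveElem {B : Type u} [NonUnitalCStarAlgebra B] (b : B) : Prop :=
  ∃ c : B, b = star c * c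

/-- Positivity of a matrix over a C*-algebra. -/
def MatrixIsPositive {A : Type u} [NonUnitalCStarAlgebra A] {n : ℕ}
    (M : Matrix (Fin n) (Fin n) A) : Prop :=
  ∃ N : Matrix (Fin n) (Fin n) A, M = N.conjTranspose * N

/-- A sequential (the algebras in question are separable) approximate unit. -/
structure IsApproxUnit {A : Type u} [NonUnitalCStarAlgebra A] (e : ℕ → A) : Prop where
  pos : ∀ n, IsPositiveElem (e n)
  norm_le_one : ∀ n, ‖e n‖ ≤ 1
  tendsto_mul_left : ∀ a : A, Tendsto (fun n => e n * a) atTop (𝓝 a)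
  tendsto_mul_right : ∀ a : A, Tendsto (fun n => a * e n) atTop (𝓝 a)

/-- A completely positive map between C*-algebras: a linear map sending positive
matrices to positive matrices at every matrix level. -/
structure IsCPMap {A B : Type u} [NonUnitalCStarAlgebra A] [NonUnitalCStarAlgebra B]
    (ρ : A → B) : Prop where
  map_add : ∀ a a', ρ (a + a') = ρ a + ρ a'
  map_smul : ∀ (c : ℂ) (a : A), ρ (c • a) = c • ρ a
  map_pos_matrix : ∀ (n : ℕ) (M : Matrix (Fin n) (Fin n) A),
    MatrixIsPositive M → MatrixIsPositive (M.map ρ)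

/-- A map between C*-algebras is strict if some approximate unit of the domain is
sent to a strictly Cauchy net in the multiplier algebra of the codomain. -/
def IsStrictMap {A B : Type u} [NonUnitalCStarAlgebra A] [NonUnitalCStarAlgebra B]
    (ρ : A → B) : Prop :=
  ∃ e : ℕ → A, IsApproxUnit e ∧
    ∀ b : B, CauchySeq (fun n => ρ (e n) * b) ∧ CauchySeq (fun n => b * ρ (e n))

/-- A completely positive map from `A` into the adjointable operators on a
right Hilbert `B`-module `X`. -/
structure IsCPAction {A B X : Type u} [NonUnitalCStarAlgebra A] [NonUnitalCStarAlgebra B]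
    [NormedAddCommGroup X] [NormedSpace ℂ X] [CompleteSpace X]
    (hX : HilbertModule B X) (ρ : A → X → X) : Prop where
  map_add : ∀ a a' x, ρ (a + a') x = ρ a x + ρ a' x
  map_smul : ∀ (c : ℂ) (a : A) x, ρ (c • a) x = c • ρ a x
  add_right : ∀ a x y, ρ a (x + y) = ρ a x + ρ a y
  adjointable : ∀ a, ∃ S, HilbertModule.IsAdjointPair hX hX (ρ a) S
  pos : ∀ (n : ℕ) (M : Matrix (Fin n) (Fin n) A), MatrixIsPositive M →
    ∀ x : Fin n → X, IsPositiveElem (∑ i, ∑ j, hX.inner (x i) (ρ (M i j) (x j)))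

/-- Strictness for a completely positive map into the adjointable operators on a
Hilbert module: some approximate unit is mapped to a strictly Cauchy net. -/
def IsStrictAction {A B X : Type u} [NonUnitalCStarAlgebra A] [NonUnitalCStarAlgebra B]
    [NormedAddCommGroup X] [NormedSpace ℂ X] [CompleteSpace X]
    (hX : HilbertModule B X) (ρ : A → X → X) : Prop :=
  ∃ e : ℕ → A, IsApproxUnit e ∧ ∃ S : ℕ → X → X,
    (∀ n, HilbertModule.IsAdjointPair hX hX (ρ (e n)) (S n)) ∧
    ∀ x, CauchySeq (fun n => ρ (e n) x) ∧ CauchySeq (fun n => S n x)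

/-- A left action of `A` on a Hilbert `B`-module by adjointable operators via a
*-homomorphism, i.e. the structure of an `A`–`B`-correspondence. -/
structure IsCorrespondenceAction {A B X : Type u} [NonUnitalCStarAlgebra A]
    [NonUnitalCStarAlgebra B]
    [NormedAddCommGroup X] [NormedSpace ℂ X] [CompleteSpace X]
    (hX : HilbertModule B X) (φ : A → X → X) : Prop where
  map_add : ∀ a a' x, φ (a + a') x = φ a x + φ a' x
  map_mul : ∀ a a' x, φ (a * a') x = φ a (φ a' x)
  map_smul : ∀ (c : ℂ) (a : A) x, φ (c • a) x = c • φ a x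
  add_right : ∀ a x y, φ a (x + y) = φ a x + φ a y
  star_adjoint : ∀ a, HilbertModule.IsAdjointPair hX hX (φ a) (φ (star a))

/-- The trivial right Hilbert `B`-module structure on `B` itself. -/
def trivHM (B : Type u) [NonUnitalCStarAlgebra B] : HilbertModule B B where
  smulR b c := b * c
  inner b c := star b * c
  smulR_add := by intros; simp [mul_add]
  add_smulR := by intros; simp [add_mul]
  smulR_mul := by intros; simp [mul_assoc]
  smulC_smulR := by intros; simp [smul_mul_assoc]
  inner_add_left := by intros; simp [star_add, add_mul]
  inner_add_right := by intros; simp [mul_add]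
  inner_smulR_right := by intros; simp [mul_assoc]
  inner_smulC_right := by intros; simp [mul_smul_comm]
  star_inner := by intros; simp [star_mul, mul_assoc]
  inner_self_pos := fun b => ⟨b, rfl⟩
  norm_inner_self := by intro b; rw [CStarRing.norm_star_mul_self, pow_two]

/-- The KSGNS construction applied to a (strict, completely positive) map
`ρ : A → End_B(X)`: the Hilbert `B`-module `E = A ⊗_ρ X`, presented via the
canonical map `t : (a, x) ↦ a ⊗ x`, its characteristic inner product identity,
density of the image, and the canonical left action `π_ρ` of `A`. -/
structure KSGNSData {A B X : Type u} [NonUnitalCStarAlgebra A] [NonUnitalCStarAlgebra B]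
    [NormedAddCommGroup X] [NormedSpace ℂ X] [CompleteSpace X]
    (hX : HilbertModule B X) (ρ : A → X → X)
    (E : Type u) [NormedAddCommGroup E] [NormedSpace ℂ E] [CompleteSpace E] :
    Type u where
  str : HilbertModule B E
  t : A → X → E
  t_add_left : ∀ a a' x, t (a + a') x = t a x + t a' x
  t_add_right : ∀ a x x', t a (x + x') = t a x + t a x'
  inner_t : ∀ a₁ x₁ a₂ x₂,
    str.inner (t a₁ x₁) (t a₂ x₂) = hX.inner x₁ (ρ (star a₁ * a₂) x₂)
  dense : (Submodule.span ℂ (Set.range fun p : A × X => t p.1 p.2)).topologicalClosure = ⊤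
  act : A → E → E
  act_t : ∀ a a' x, act a (t a' x) = t (a * a') x
  act_add : ∀ a e e', act a (e + e') = act a e + act a e'
  act_adjoint : ∀ a, HilbertModule.IsAdjointPair str str (act a) (act (star a))

/-- The interior (balanced) tensor product `X ⊗_B Y` of a right Hilbert
`B`-module `X` with a Hilbert `C`-module `Y` carrying a left `B`-action `actY`,
presented via the canonical bilinear map `mk2 : (x, y) ↦ x ⊗ y` with its
characteristic inner product identity and density of elementary tensors. -/
structure TensorData {B C X Y : Type u} [NonUnitalCStarAlgebra B] [NonUnitalCStarAlgebra C]
    [NormedAddCommGroup X] [NormedSpace ℂ X] [CompleteSpace X]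
    [NormedAddCommGroup Y] [NormedSpace ℂ Y] [CompleteSpace Y]
    (hX : HilbertModule B X) (hY : HilbertModule C Y) (actY : B → Y → Y)
    (T : Type u) [NormedAddCommGroup T] [NormedSpace ℂ T] [CompleteSpace T] :
    Type u where
  str : HilbertModule C T
  mk2 : X → Y → T
  mk2_add_left : ∀ x x' y, mk2 (x + x') y = mk2 x y + mk2 x' y
  mk2_add_right : ∀ x y y', mk2 x (y + y') = mk2 x y + mk2 x y'
  mk2_balanced : ∀ x b y, mk2 (hX.smulR x b) y = mk2 x (actY b y)
  inner_mk2 : ∀ x₁ y₁ x₂ y₂,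
    str.inner (mk2 x₁ y₁) (mk2 x₂ y₂) = hY.inner y₁ (actY (hX.inner x₁ x₂) y₂)
  dense : (Submodule.span ℂ (Set.range fun p : X × Y => mk2 p.1 p.2)).topologicalClosure = ⊤

/-!
The C⋆-identity on `End_B(X)` makes `‖T‖² - T⋆T` a square `R⋆R`, which bounds `T ⊗ Id` by `‖T‖`, so
`T ↦ T ⊗ Id` is a ⋆-homomorphism `End_B(X) → End_C(X ⊗_B Y)`. Uniform boundedness then carries
strict convergence from `ρ` to `ρ ⊗ Id`. For complete positivity, the matrix
`⟨x k, ρ (c k⋆ c l) x l⟩` is positive over `B`, hence so is its image under `φ`, and elementary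
tensors are total. Finally `(a ⊗ x) ⊗ y` and `a ⊗ (x ⊗ y)` run through total families with the same
Gram matrix, and so are matched by a unitary.
-/

section

open scoped TensorProduct

attribute [local instance] CStarAlgebra.spectralOrder CStarAlgebra.spectralOrderedRing

lemma isPositiveElem_iff_nonneg {B : Type*} [NonUnitalCStarAlgebra B] {b : B} :
    IsPositiveElem b ↔ 0 ≤ b :=
  CStarAlgebra.nonneg_iff_eq_star_mul_self.symm

namespace HilbertModule

variable {B X : Type u} [NonUnitalCStarAlgebra B]
  [NormedAddCommGroup X] [NormedSpace ℂ X] [CompleteSpace X] (hX : HilbertModule B X)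

lemma inner_smulC_left (c : ℂ) (x y : X) : hX.inner (c • x) y = star c • hX.inner x y := by
  rw [← hX.star_inner, hX.inner_smulC_right, star_smul, hX.star_inner]

lemma inner_smulR_left (x y : X) (b : B) :
    hX.inner (hX.smulR x b) y = star b * hX.inner x y := by
  rw [← hX.star_inner, hX.inner_smulR_right, star_mul, hX.star_inner]

/-- The inner product as a sesquilinear map. -/
def innerₛₗ : X →ₗ⋆[ℂ] X →ₗ[ℂ] B where
  toFun x :=
    { toFun := hX.inner x
      map_add' := hX.inner_add_right x
      map_smul' := fun c y => hX.inner_smulC_right c x y }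
  map_add' x y := LinearMap.ext fun z => hX.inner_add_left x y z
  map_smul' c x := LinearMap.ext fun z => hX.inner_smulC_left c x z

lemma inner_zero_left (x : X) : hX.inner 0 x = 0 :=
  DFunLike.congr_fun (map_zero hX.innerₛₗ) x

lemma inner_zero_right (x : X) : hX.inner x 0 = 0 :=
  map_zero (hX.innerₛₗ x)

lemma inner_sum_right {ι : Type*} (s : Finset ι) (x : X) (y : ι → X) :
    hX.inner x (∑ i ∈ s, y i) = ∑ i ∈ s, hX.inner x (y i) :=
  map_sum (hX.innerₛₗ x) y s

lemma inner_sum_left {ι : Type*} (s : Finset ι) (x : ι → X) (y : X) :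
    hX.inner (∑ i ∈ s, x i) y = ∑ i ∈ s, hX.inner (x i) y :=
  map_sum (hX.innerₛₗ.flip y) x s

lemma inner_self_nonneg (x : X) : 0 ≤ hX.inner x x :=
  isPositiveElem_iff_nonneg.1 (hX.inner_self_pos x)

lemma norm_eq_sqrt_norm_inner_self (x : X) : ‖x‖ = √‖hX.inner x x‖ := by
  rw [← hX.norm_inner_self, Real.sqrt_sq (norm_nonneg x)]

lemma inner_self_eq_zero {x : X} : hX.inner x x = 0 ↔ x = 0 := by
  rw [← norm_eq_zero, ← hX.norm_inner_self, sq_eq_zero_iff, norm_eq_zero]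

/-- The right action of `B` on a Hilbert `B`-module as a left action of `Bᵐᵒᵖ`. -/
abbrev opSMul : SMul Bᵐᵒᵖ X := ⟨fun b x => hX.smulR x b.unop⟩

/-- A right Hilbert `B`-module as a Hilbert module in the sense of Mathlib, where C⋆-algebras act
from the left: the scalars become `Bᵐᵒᵖ`. -/
abbrev toCStarModule : letI := hX.opSMul; CStarModule Bᵐᵒᵖ X :=
  letI := hX.opSMul
  { inner x y := .op (hX.inner x y)
    inner_add_right := congrArg _ (hX.inner_add_right _ _ _)
    inner_self_nonneg {x} := by
      obtain ⟨b, hb⟩ := hX.inner_self_pos x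
      rw [hb]
      exact mul_star_self_nonneg (MulOpposite.op b)
    inner_self := (MulOpposite.op_eq_zero_iff _).trans hX.inner_self_eq_zero
    inner_op_smul_right := congrArg _ (hX.inner_smulR_right _ _ _)
    inner_smul_right_complex := congrArg _ (hX.inner_smulC_right _ _ _)
    star_inner x y := congrArg _ (hX.star_inner x y)
    norm_eq_sqrt_norm_inner_self := hX.norm_eq_sqrt_norm_inner_self }

lemma norm_inner_le (x y : X) : ‖hX.inner x y‖ ≤ ‖x‖ * ‖y‖ :=
  letI := hX.opSMul
  letI := hX.toCStarModule
  CStarModule.norm_inner_le (A := Bᵐᵒᵖ) X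

/-- The inner product as a continuous sesquilinear map. -/
def innerSL : X →L⋆[ℂ] X →L[ℂ] B :=
  hX.innerₛₗ.mkContinuous₂ 1 fun x y => (hX.norm_inner_le x y).trans_eq (by rw [one_mul])

lemma innerSL_apply (x y : X) : hX.innerSL x y = hX.inner x y := rfl

variable {ι : Type*} {j : ι → X}

lemma eq_of_forall_inner_eq (hj : Dense (Submodule.span ℂ (Set.range j) : Set X)) {x y : X}
    (h : ∀ i, hX.inner (j i) x = hX.inner (j i) y) : x = y := by
  have heq : hX.innerSL.flip x = hX.innerSL.flip y :=
    ContinuousLinearMap.ext_on hj (Set.forall_mem_range.2 h)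
  rw [← sub_eq_zero, ← hX.inner_self_eq_zero, ← innerSL_apply, map_sub, sub_eq_zero]
  exact DFunLike.congr_fun heq (x - y)

lemma ext_inner_left {x y : X} (h : ∀ w, hX.inner w x = hX.inner w y) : x = y :=
  hX.eq_of_forall_inner_eq (j := id) (by simp) h

/-- A map into a Hilbert module whose matrix coefficients against a total family are continuous
linear maps, as a continuous linear map. Both linearity and (by the closed graph theorem) continuity
can be read off from the coefficients. -/
def clmOfInner {V : Type*} [NormedAddCommGroup V] [NormedSpace ℂ V] [CompleteSpace V]
    (hj : Dense (Submodule.span ℂ (Set.range j) : Set X)) (T : V → X) (f : ι → V →L[ℂ] B)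
    (hf : ∀ i v, hX.inner (j i) (T v) = f i v) : V →L[ℂ] X :=
  .ofIsClosedGraph (g :=
    { toFun := T
      map_add' := fun v w => hX.eq_of_forall_inner_eq hj fun i => by
        rw [hX.inner_add_right, hf, hf, hf, map_add]
      map_smul' := fun c v => hX.eq_of_forall_inner_eq hj fun i => by
        rw [RingHom.id_apply, hX.inner_smulC_right, hf, hf, map_smul] }) <| by
    convert isClosed_iInter fun i => isClosed_eq (f := fun p : V × X => hX.innerSL (j i) p.2)
      (g := fun p => f i p.1) (by fun_prop) (by fun_prop) using 1
    ext p
    simp only [SetLike.mem_coe, LinearMap.mem_graph_iff, Set.mem_iInter, Set.mem_ofPred_eq,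
      innerSL_apply, ← hf]
    exact ⟨fun h _ => congrArg _ h, hX.eq_of_forall_inner_eq hj⟩

section Adjoint

variable {Y : Type u} [NormedAddCommGroup Y] [NormedSpace ℂ Y] [CompleteSpace Y]
  {hX} {hY : HilbertModule B Y} {T : X → Y} {S : Y → X}

lemma IsAdjointPair.symm (h : IsAdjointPair hX hY T S) : IsAdjointPair hY hX S T := fun y x => by
  rw [← hX.star_inner, ← h, hY.star_inner]

/-- An adjointable map, as a continuous linear map. -/
def IsAdjointPair.toCLM (h : IsAdjointPair hX hY T S) : X →L[ℂ] Y :=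
  hY.clmOfInner (j := id) (by simp) T (fun y => hX.innerSL (S y)) fun y x => (h.symm y x).symm

end Adjoint

/-- The algebra `End_B(X)` of adjointable operators on a Hilbert `B`-module `X`. -/
def adjointable : Subalgebra ℂ (X →L[ℂ] X) where
  carrier := {T | ∃ S : X → X, IsAdjointPair hX hX T S}
  mul_mem' := by
    rintro T T' ⟨S, hS⟩ ⟨S', hS'⟩
    exact ⟨S' ∘ S, fun x y => (hS _ y).trans (hS' x _)⟩
  add_mem' := by
    rintro T T' ⟨S, hS⟩ ⟨S', hS'⟩
    exact ⟨S + S', fun x y => by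
      rw [add_apply, hX.inner_add_left, hS, hS', Pi.add_apply, hX.inner_add_right]⟩
  algebraMap_mem' c := ⟨(star c • ·), fun x y => by
    rw [Algebra.algebraMap_eq_smul_one, smul_apply, one_apply_eq_self, inner_smulC_left,
      hX.inner_smulC_right]⟩

namespace adjointable

variable {hX}

lemma ext_inner {T S : hX.adjointable}
    (h : ∀ x y, hX.inner x ((T : X →L[ℂ] X) y) = hX.inner x ((S : X →L[ℂ] X) y)) : T = S :=
  Subtype.ext <| ContinuousLinearMap.ext fun y => hX.ext_inner_left fun x => h x y

instance : Star hX.adjointable where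
  star T := ⟨T.2.choose_spec.symm.toCLM, T, T.2.choose_spec.symm⟩

lemma isAdjointPair_star (T : hX.adjointable) :
    IsAdjointPair hX hX (T : X →L[ℂ] X) (star T : hX.adjointable).1 :=
  T.2.choose_spec

lemma inner_star_right (T : hX.adjointable) (x y : X) :
    hX.inner x ((star T).1 y) = hX.inner (T.1 x) y :=
  (isAdjointPair_star T x y).symm

lemma inner_star_left (T : hX.adjointable) (x y : X) :
    hX.inner ((star T).1 x) y = hX.inner x (T.1 y) :=
  (isAdjointPair_star T).symm x y

instance : StarRing hX.adjointable where
  star_involutive T := ext_inner fun x y => by rw [inner_star_right, inner_star_left]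
  star_mul T S := ext_inner fun x y => by
    simp only [inner_star_right, MulMemClass.coe_mul, mul_apply_eq_comp]
  star_add T S := ext_inner fun x y => by
    simp only [inner_star_right, AddMemClass.coe_add, add_apply, hX.inner_add_left,
      hX.inner_add_right]

instance : StarModule ℂ hX.adjointable where
  star_smul c T := ext_inner fun x y => by
    simp only [inner_star_right, SetLike.val_smul, smul_apply, inner_smulC_left,
      hX.inner_smulC_right]

lemma inner_apply_self (T : hX.adjointable) (x : X) :
    hX.inner (T.1 x) (T.1 x) = hX.inner x ((star T * T).1 x) := by
  rw [← inner_star_right]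
  rfl

instance : CStarRing hX.adjointable where
  norm_mul_self_le T := by
    have hbound : ‖T.1‖ ≤ √‖star T * T‖ := T.1.opNorm_le_bound (Real.sqrt_nonneg _) fun x => by
      refine le_of_sq_le_sq ?_ (by positivity)
      calc ‖T.1 x‖ ^ 2 = ‖hX.inner x ((star T * T).1 x)‖ := by
            rw [hX.norm_inner_self, inner_apply_self]
        _ ≤ ‖x‖ * (‖star T * T‖ * ‖x‖) :=
            (hX.norm_inner_le _ _).trans (by gcongr; exact (star T * T).1.le_opNorm x)
        _ = (√‖star T * T‖ * ‖x‖) ^ 2 := by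
            rw [mul_pow, Real.sq_sqrt (norm_nonneg (star T * T))]
            ring
    simpa only [← sq, Real.sq_sqrt (norm_nonneg (star T * T))] using
      pow_le_pow_left₀ (norm_nonneg T) hbound 2

instance : CompleteSpace hX.adjointable := by
  refine Metric.complete_of_cauchySeq_tendsto fun u hu => ?_
  obtain ⟨T, hT⟩ := cauchySeq_tendsto_of_complete (uniformContinuous_subtype_val.comp_cauchySeq hu)
  obtain ⟨S, hS⟩ := cauchySeq_tendsto_of_complete <| uniformContinuous_subtype_val.comp_cauchySeq <|
    (star_isometry (E := hX.adjointable)).uniformContinuous.comp_cauchySeq hu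
  have hadj : IsAdjointPair hX hX T S := fun x y => by
    have hl := (continuous_eval_const x |>.tendsto T).comp hT
    have hr := (continuous_eval_const y |>.tendsto S).comp hS
    refine tendsto_nhds_unique ((hX.innerSL.flip y).continuous.tendsto _ |>.comp hl) ?_
    refine ((hX.innerSL x).continuous.tendsto _ |>.comp hr).congr fun n => ?_
    exact inner_star_right (u n) x y
  exact ⟨⟨T, S, hadj⟩, tendsto_subtype_rng.2 hT⟩

instance : CStarAlgebra hX.adjointable where

end adjointable

variable {hX} in
/-- An adjointable map, as an element of the algebra of adjointable operators. -/
def IsAdjointPair.toAdjointable {T S : X → X} (h : IsAdjointPair hX hX T S) : hX.adjointable :=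
  ⟨h.toCLM, S, h⟩

variable (Y : Type*) [AddCommGroup Y] [Module ℂ Y]

/-- The action `T ↦ T ⊗ Id` on the algebraic tensor product over `ℂ`. -/
def tensorId : hX.adjointable →ₐ[ℂ] Module.End ℂ (X ⊗[ℂ] Y) :=
  (Module.End.rTensorAlgHom ℂ X Y).comp
    ((AlgHom.ofLinearMap (ContinuousLinearMap.coeLM ℂ) rfl fun _ _ => rfl).comp
      hX.adjointable.val)

lemma tensorId_tmul (T : hX.adjointable) (x : X) (y : Y) :
    hX.tensorId Y T (x ⊗ₜ y) = T.1 x ⊗ₜ y := rfl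

end HilbertModule

lemma exists_star_mul_self_add_star_mul_self_eq {M : Type*} [CStarAlgebra M] (T : M) :
    ∃ R : M, star T * T + star R * R = ((‖T‖ ^ 2 : ℝ) : ℂ) • 1 := by
  have h := CStarAlgebra.star_mul_le_algebraMap_norm_sq (a := T)
  obtain ⟨R, hR⟩ := CStarAlgebra.nonneg_iff_eq_star_mul_self.1 (sub_nonneg.2 h)
  exact ⟨R, by rw [← hR, add_sub_cancel, Algebra.algebraMap_eq_smul_one]; rfl⟩

namespace IsCorrespondenceAction

open HilbertModule

variable {A B X : Type u} [NonUnitalCStarAlgebra A] [NonUnitalCStarAlgebra B]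
  [NormedAddCommGroup X] [NormedSpace ℂ X] [CompleteSpace X]
  {hX : HilbertModule B X} {φ : A → X → X} (hφ : IsCorrespondenceAction hX φ)

/-- A correspondence action as a ⋆-homomorphism into the adjointable operators. -/
def toStarAlgHom : A →⋆ₙₐ[ℂ] hX.adjointable where
  toFun a := (hφ.star_adjoint a).toAdjointable
  map_add' a a' := adjointable.ext_inner fun x y => congrArg _ (hφ.map_add a a' y)
  map_mul' a a' := adjointable.ext_inner fun x y => congrArg _ (hφ.map_mul a a' y)
  map_smul' c a := adjointable.ext_inner fun x y => congrArg _ (hφ.map_smul c a y)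
  map_star' a := adjointable.ext_inner fun x y => by
    rw [adjointable.inner_star_right]
    exact (hφ.star_adjoint a x y).symm
  map_zero' := adjointable.ext_inner fun x y => congrArg _ <| by
    change φ 0 y = 0
    simpa only [zero_smul] using hφ.map_smul 0 0 y

lemma toStarAlgHom_apply (a : A) (x : X) : (hφ.toStarAlgHom a).1 x = φ a x := rfl

/-- The orbit map `a ↦ φ a x` as a continuous linear map. -/
def orbit (x : X) : A →L[ℂ] X :=
  LinearMap.mkContinuous
    { toFun := fun a => φ a x
      map_add' := fun a a' => hφ.map_add a a' x
      map_smul' := fun c a => hφ.map_smul c a x } ‖x‖ fun a =>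
    ((hφ.toStarAlgHom a).1.le_opNorm x).trans <| by
      rw [mul_comm]
      gcongr
      exact NonUnitalStarAlgHom.norm_apply_le hφ.toStarAlgHom a

lemma orbit_apply (x : X) (a : A) : hφ.orbit x a = φ a x := rfl

end IsCorrespondenceAction

namespace TensorData

open HilbertModule

variable {B C X Y Z : Type u} [NonUnitalCStarAlgebra B] [NonUnitalCStarAlgebra C]
  [NormedAddCommGroup X] [NormedSpace ℂ X] [CompleteSpace X]
  [NormedAddCommGroup Y] [NormedSpace ℂ Y] [CompleteSpace Y]
  [NormedAddCommGroup Z] [NormedSpace ℂ Z] [CompleteSpace Z]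
  {hX : HilbertModule B X} {hY : HilbertModule C Y} {φ : B → Y → Y}
  (TD : TensorData hX hY φ Z)

lemma dense_span :
    Dense (Submodule.span ℂ (Set.range fun p : X × Y => TD.mk2 p.1 p.2) : Set Z) :=
  Submodule.dense_iff_topologicalClosure_eq_top.2 TD.dense

lemma clm_ext {W : Type*} [TopologicalSpace W] [T2Space W] [AddCommGroup W]
    [Module ℂ W] {L L' : Z →L[ℂ] W}
    (h : ∀ x y, L (TD.mk2 x y) = L' (TD.mk2 x y)) : L = L' :=
  ContinuousLinearMap.ext_on TD.dense_span <| Set.forall_mem_range.2 fun p => h p.1 p.2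

/-- The operator `x ↦ x ⊗ y`. -/
def mk2L (hφ : IsCorrespondenceAction hY φ) (y : Y) : X →L[ℂ] Z :=
  TD.str.clmOfInner TD.dense_span (fun x => TD.mk2 x y)
    (fun p => hY.innerSL p.2 ∘L hφ.orbit y ∘L hX.innerSL p.1) fun p x => TD.inner_mk2 p.1 p.2 x y

lemma mk2_smul_right (hφ : IsCorrespondenceAction hY φ) (c : ℂ) (x : X) (y : Y) :
    TD.mk2 x (c • y) = c • TD.mk2 x y :=
  TD.str.eq_of_forall_inner_eq TD.dense_span fun p => by
    rw [TD.str.inner_smulC_right, TD.inner_mk2, TD.inner_mk2, ← hφ.toStarAlgHom_apply, map_smul,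
      hφ.toStarAlgHom_apply, hY.inner_smulC_right]

variable (hφ : IsCorrespondenceAction hY φ)

/-- The canonical map from the algebraic tensor product over `ℂ` to the interior tensor product. -/
def ofTensorProduct : X ⊗[ℂ] Y →ₗ[ℂ] Z :=
  TensorProduct.lift <| LinearMap.mk₂ ℂ TD.mk2 TD.mk2_add_left
    (fun c x y => map_smul (TD.mk2L hφ y) c x) TD.mk2_add_right (TD.mk2_smul_right hφ)

lemma ofTensorProduct_tmul (x : X) (y : Y) : TD.ofTensorProduct hφ (x ⊗ₜ y) = TD.mk2 x y := rfl

lemma denseRange_ofTensorProduct : DenseRange (TD.ofTensorProduct hφ) :=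
  TD.dense_span.mono <| (Submodule.span_le (p := LinearMap.range (TD.ofTensorProduct hφ))).2 <|
    Set.range_subset_iff.2 fun p => ⟨p.1 ⊗ₜ p.2, TD.ofTensorProduct_tmul hφ p.1 p.2⟩

lemma inner_tensorId (T : hX.adjointable) (v w : X ⊗[ℂ] Y) :
    TD.str.inner (TD.ofTensorProduct hφ (hX.tensorId Y T v)) (TD.ofTensorProduct hφ w) =
      TD.str.inner (TD.ofTensorProduct hφ v)
        (TD.ofTensorProduct hφ (hX.tensorId Y (star T) w)) := by
  induction v with
  | zero => simp only [map_zero, TD.str.inner_zero_left]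
  | add v v' hv hv' => simp only [map_add, TD.str.inner_add_left, hv, hv']
  | tmul x y =>
    induction w with
    | zero => simp only [map_zero, TD.str.inner_zero_right]
    | add w w' hw hw' => simp only [map_add, TD.str.inner_add_right, hw, hw']
    | tmul x' y' =>
      simp only [tensorId_tmul, ofTensorProduct_tmul, TD.inner_mk2, adjointable.inner_star_right]

lemma norm_tensorId_le (T : hX.adjointable) (v : X ⊗[ℂ] Y) :
    ‖TD.ofTensorProduct hφ (hX.tensorId Y T v)‖ ≤ ‖T‖ * ‖TD.ofTensorProduct hφ v‖ := by
  obtain ⟨R, hR⟩ := exists_star_mul_self_add_star_mul_self_eq T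
  have hself : ∀ S : hX.adjointable,
      TD.str.inner (TD.ofTensorProduct hφ (hX.tensorId Y S v))
        (TD.ofTensorProduct hφ (hX.tensorId Y S v)) =
      TD.str.inner (TD.ofTensorProduct hφ v)
        (TD.ofTensorProduct hφ (hX.tensorId Y (star S * S) v)) := fun S => by
    rw [inner_tensorId, map_mul, Module.End.mul_apply]
  have hsum := congrArg (fun S => TD.str.inner (TD.ofTensorProduct hφ v)
    (TD.ofTensorProduct hφ (hX.tensorId Y S v))) hR
  simp only [map_add, LinearMap.add_apply, TD.str.inner_add_right, ← hself, map_smul, map_one,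
    LinearMap.smul_apply, Module.End.one_apply, TD.str.inner_smulC_right] at hsum
  refine le_of_sq_le_sq ?_ (by positivity)
  rw [mul_pow, TD.str.norm_inner_self, TD.str.norm_inner_self]
  refine (CStarAlgebra.norm_le_norm_of_nonneg_of_le (TD.str.inner_self_nonneg _)
    (hsum ▸ le_add_of_nonneg_right (TD.str.inner_self_nonneg _))).trans_eq ?_
  rw [norm_smul, Complex.norm_real, norm_pow, norm_norm]

/-- `T ⊗ Id` as a continuous linear map. -/
def rTensorCLM (T : hX.adjointable) : Z →L[ℂ] Z :=
  (TD.ofTensorProduct hφ ∘ₗ hX.tensorId Y T).extendOfNorm (TD.ofTensorProduct hφ)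

lemma rTensorCLM_ofTensorProduct (T : hX.adjointable) (v : X ⊗[ℂ] Y) :
    TD.rTensorCLM hφ T (TD.ofTensorProduct hφ v) = TD.ofTensorProduct hφ (hX.tensorId Y T v) :=
  LinearMap.extendOfNorm_eq (TD.denseRange_ofTensorProduct hφ) ⟨‖T‖, TD.norm_tensorId_le hφ T⟩ v

lemma rTensorCLM_mk2 (T : hX.adjointable) (x : X) (y : Y) :
    TD.rTensorCLM hφ T (TD.mk2 x y) = TD.mk2 (T.1 x) y :=
  TD.rTensorCLM_ofTensorProduct hφ T (x ⊗ₜ y)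

lemma isAdjointPair_rTensorCLM (T : hX.adjointable) :
    IsAdjointPair TD.str TD.str (TD.rTensorCLM hφ T) (TD.rTensorCLM hφ (star T)) := fun v w => by
  refine (TD.denseRange_ofTensorProduct hφ).induction_on₂ (p := fun v w =>
    TD.str.inner (TD.rTensorCLM hφ T v) w = TD.str.inner v (TD.rTensorCLM hφ (star T) w)) ?_ ?_ v w
  · simp only [← TD.str.innerSL_apply]
    exact isClosed_eq (by fun_prop) (by fun_prop)
  · intro v w
    rw [rTensorCLM_ofTensorProduct, rTensorCLM_ofTensorProduct, inner_tensorId]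

/-- The ⋆-homomorphism `T ↦ T ⊗ Id` from `End_B(X)` to `End_C(X ⊗_B Y)`. -/
def rTensor : hX.adjointable →⋆ₐ[ℂ] TD.str.adjointable where
  toFun T := ⟨TD.rTensorCLM hφ T, _, TD.isAdjointPair_rTensorCLM hφ T⟩
  map_one' := Subtype.ext <| TD.clm_ext fun x y => TD.rTensorCLM_mk2 hφ 1 x y
  map_mul' T S := Subtype.ext <| TD.clm_ext fun x y => by
    simp only [rTensorCLM_mk2, MulMemClass.coe_mul, mul_apply_eq_comp]
  map_zero' := Subtype.ext <| TD.clm_ext fun x y =>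
    (TD.rTensorCLM_mk2 hφ 0 x y).trans (map_zero (TD.mk2L hφ y))
  map_add' T S := Subtype.ext <| TD.clm_ext fun x y => by
    simp only [rTensorCLM_mk2, AddMemClass.coe_add, add_apply, TD.mk2_add_left]
  commutes' c := Subtype.ext <| TD.clm_ext fun x y =>
    (TD.rTensorCLM_mk2 hφ _ x y).trans (map_smul (TD.mk2L hφ y) c x)
  map_star' T := adjointable.ext_inner fun v w => by
    rw [adjointable.inner_star_right]
    exact (TD.isAdjointPair_rTensorCLM hφ T v w).symm

lemma rTensor_mk2 (T : hX.adjointable) (x : X) (y : Y) :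
    (TD.rTensor hφ T).1 (TD.mk2 x y) = TD.mk2 (T.1 x) y :=
  TD.rTensorCLM_mk2 hφ T x y

end TensorData

lemma star_eq_of_isSelfAdjoint_add {B : Type*} [AddCommGroup B] [StarAddMonoid B] [Module ℂ B]
    [StarModule ℂ B] {p q : B} (h : IsSelfAdjoint (p + q))
    (hI : IsSelfAdjoint (Complex.I • p - Complex.I • q)) : star p = q := by
  have hadd : star p + star q = p + q := by rw [← star_add, h.star_eq]
  have hsub : star p - star q = q - p := by
    refine smul_right_injective B Complex.I_ne_zero ?_
    simpa only [star_sub, star_smul, Complex.star_def, Complex.conj_I, neg_smul, smul_sub,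
      neg_sub_neg, neg_eq_iff_eq_neg, neg_sub] using congrArg Neg.neg hI.star_eq
  refine smul_right_injective B (two_ne_zero (α := ℂ)) ?_
  linear_combination (norm := module) hadd + hsub

section MatrixPositivity

variable {B : Type*} [NonUnitalCStarAlgebra B]

lemma eq_zero_of_isSelfAdjoint_of_mul_mul_eq_zero {a : B} (ha : IsSelfAdjoint a)
    (h : a * a * a = 0) : a = 0 := by
  have hsq : star (star a * a) * (star a * a) = 0 := by
    rw [star_mul, star_star, ha.star_eq, ← mul_assoc, h, zero_mul]
  exact (CStarRing.star_mul_self_eq_zero_iff a).1 ((CStarRing.star_mul_self_eq_zero_iff _).1 hsq)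

/- For a Jordan decomposition `a = p - n`, the element `n * a * n = -n ^ 3` is negative. -/
lemma nonneg_of_forall_conjugate_nonpos_imp_eq_zero {a : B} (ha : IsSelfAdjoint a)
    (h : ∀ n, IsSelfAdjoint n → n * a * n ≤ 0 → n * a * n = 0) : 0 ≤ a := by
  have hneg : IsSelfAdjoint a⁻ := .of_nonneg (CFC.negPart_nonneg a)
  have hcube : a⁻ * a * a⁻ = -(a⁻ * a⁻ * a⁻) :=
    calc a⁻ * a * a⁻ = a⁻ * (a⁺ - a⁻) * a⁻ := by rw [CFC.posPart_sub_negPart a ha]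
      _ = -(a⁻ * a⁻ * a⁻) := by rw [mul_sub, CFC.negPart_mul_posPart, zero_sub, neg_mul]
  refine (CFC.negPart_eq_zero_iff a ha).1 <| eq_zero_of_isSelfAdjoint_of_mul_mul_eq_zero hneg ?_
  rw [← neg_eq_zero, ← hcube]
  refine h _ hneg ?_
  rw [hcube, neg_nonpos]
  exact hneg.conjugate_nonneg (CFC.negPart_nonneg a)

variable {ι : Type*} [Fintype ι] {M : CStarMatrix ι ι B}

lemma cstarMatrix_eq_zero_of_forall_apply_self_nonpos (hM : 0 ≤ M) (h : ∀ k, M k k ≤ 0) :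
    M = 0 := by
  obtain ⟨R, rfl⟩ := isPositiveElem_iff_nonneg.2 hM
  suffices R = 0 by rw [this, mul_zero]
  refine CStarMatrix.ext fun m k => (CStarRing.star_mul_self_eq_zero_iff _).1 ?_
  have hnonneg : ∀ m ∈ Finset.univ, 0 ≤ star (R m k) * R m k := fun m _ => star_mul_self_nonneg _
  have hsum : ∑ m, star (R m k) * R m k = 0 := (h k).antisymm (Finset.sum_nonneg hnonneg)
  exact (Finset.sum_eq_zero_iff_of_nonneg hnonneg).1 hsum m (Finset.mem_univ m)

lemma cstarMatrix_nonneg_of_forall_sum_nonneg (hM : IsSelfAdjoint M)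
    (h : ∀ b : ι → B, 0 ≤ ∑ k, ∑ l, star (b k) * M k l * b l) : 0 ≤ M := by
  refine nonneg_of_forall_conjugate_nonpos_imp_eq_zero hM fun N hN hle => ?_
  have hdiag : ∀ k, 0 ≤ (N * M * N) k k := fun k => by
    convert h fun l => N l k using 1
    simp only [CStarMatrix.mul_apply, ← CStarMatrix.star_apply, hN.star_eq, Finset.sum_mul]
    exact Finset.sum_comm
  exact neg_eq_zero.1 <| cstarMatrix_eq_zero_of_forall_apply_self_nonpos (neg_nonneg.2 hle)
    fun k => neg_nonpos.2 (hdiag k)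

end MatrixPositivity

lemma IsCorrespondenceAction.sum_inner_nonneg {A B X : Type u} [NonUnitalCStarAlgebra A]
    [NonUnitalCStarAlgebra B] [NormedAddCommGroup X] [NormedSpace ℂ X] [CompleteSpace X]
    {hX : HilbertModule B X} {φ : A → X → X} (hφ : IsCorrespondenceAction hX φ)
    {ι : Type*} [Fintype ι] {M : CStarMatrix ι ι A} (hM : 0 ≤ M) (x : ι → X) :
    0 ≤ ∑ k, ∑ l, hX.inner (x k) (φ (M k l) (x l)) := by
  obtain ⟨R, rfl⟩ := isPositiveElem_iff_nonneg.2 hM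
  have hentry : ∀ k l, hX.inner (x k) (φ ((star R * R) k l) (x l)) =
      ∑ m, hX.inner (φ (R m k) (x k)) (φ (R m l) (x l)) := fun k l => by
    rw [CStarMatrix.mul_apply, ← hφ.orbit_apply, map_sum, hX.inner_sum_right]
    refine Finset.sum_congr rfl fun m _ => ?_
    rw [hφ.orbit_apply, hφ.map_mul]
    exact (hφ.star_adjoint _ _ _).symm
  have hgram : ∑ k, ∑ l, hX.inner (x k) (φ ((star R * R) k l) (x l)) =
      ∑ m, hX.inner (∑ k, φ (R m k) (x k)) (∑ k, φ (R m k) (x k)) := by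
    simp only [hentry, hX.inner_sum_left, hX.inner_sum_right]
    exact (Finset.sum_congr rfl fun k _ => Finset.sum_comm).trans Finset.sum_comm
  rw [hgram]
  exact Finset.sum_nonneg fun m _ => hX.inner_self_nonneg _

namespace IsCPAction

open HilbertModule

variable {A B X : Type u} [NonUnitalCStarAlgebra A] [NonUnitalCStarAlgebra B]
  [NormedAddCommGroup X] [NormedSpace ℂ X] [CompleteSpace X]
  {hX : HilbertModule B X} {ρ : A → X → X}

/-- A completely positive action as a linear map into the adjointable operators. -/
def toAdjointable (hρ : IsCPAction hX ρ) : A →ₗ[ℂ] hX.adjointable where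
  toFun a := (hρ.adjointable a).choose_spec.toAdjointable
  map_add' a a' := adjointable.ext_inner fun _ y => congrArg _ (hρ.map_add a a' y)
  map_smul' c a := adjointable.ext_inner fun _ y => congrArg _ (hρ.map_smul c a y)

lemma toAdjointable_apply (hρ : IsCPAction hX ρ) (a : A) (x : X) :
    (hρ.toAdjointable a).1 x = ρ a x := rfl

lemma sum_inner_nonneg (hρ : IsCPAction hX ρ) {ι : Type*} [Fintype ι]
    (c : ι → A) (x : ι → X) :
    0 ≤ ∑ k, ∑ l, hX.inner (x k) (ρ (star (c k) * c l) (x l)) := by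
  have hfin : ∀ (n : ℕ) (c : Fin n → A) (x : Fin n → X),
      0 ≤ ∑ k, ∑ l, hX.inner (x k) (ρ (star (c k) * c l) (x l)) := by
    rintro (_ | n) c x
    · simp
    · refine isPositiveElem_iff_nonneg.1 (hρ.pos (n + 1) (.of fun i j => star (c i) * c j)
        ⟨.of fun i j => if i = 0 then c j else 0, ?_⟩ x)
      ext i j
      simp [Matrix.mul_apply]
  let e := Fintype.equivFin ι
  rw [← e.symm.sum_comp]
  simp only [← e.symm.sum_comp fun l => hX.inner _ (ρ (star _ * c l) (x l))]
  exact hfin _ (c ∘ e.symm) (x ∘ e.symm)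

lemma isSelfAdjoint_inner_add_inner (hρ : IsCPAction hX ρ) (c d : A) (x y : X) :
    IsSelfAdjoint (hX.inner x (ρ (star c * d) y) + hX.inner y (ρ (star d * c) x)) := by
  have hdiag : ∀ (c : A) (x : X), IsSelfAdjoint (hX.inner x (ρ (star c * c) x)) := fun c x => by
    simpa using IsSelfAdjoint.of_nonneg (hρ.sum_inner_nonneg ![c] ![x])
  have hsum := IsSelfAdjoint.of_nonneg (hρ.sum_inner_nonneg ![c, d] ![x, y])
  convert hsum.sub ((hdiag c x).add (hdiag d y)) using 1
  simp only [Fin.sum_univ_two, Matrix.cons_val_zero, Matrix.cons_val_one]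
  abel

lemma star_inner_apply (hρ : IsCPAction hX ρ) (c d : A) (x y : X) :
    star (hX.inner x (ρ (star c * d) y)) = hX.inner y (ρ (star d * c) x) := by
  refine star_eq_of_isSelfAdjoint_add (hρ.isSelfAdjoint_inner_add_inner c d x y) ?_
  convert hρ.isSelfAdjoint_inner_add_inner c d x (Complex.I • y) using 1
  rw [← hρ.toAdjointable_apply _ (_ • _), _root_.map_smul, hX.inner_smulC_right,
    hX.inner_smulC_left, Complex.star_def, Complex.conj_I, neg_smul, sub_eq_add_neg,
    toAdjointable_apply]

lemma cstarMatrix_inner_nonneg (hρ : IsCPAction hX ρ) {ι : Type*} [Fintype ι]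
    (c : ι → A) (x : ι → X) : (0 : CStarMatrix ι ι B) ≤
      .ofMatrix (.of fun k l => hX.inner (x k) (ρ (star (c k) * c l) (x l))) := by
  refine cstarMatrix_nonneg_of_forall_sum_nonneg
    (CStarMatrix.ext fun k l => hρ.star_inner_apply _ _ _ _) fun b => ?_
  refine (hρ.sum_inner_nonneg c fun k => hX.smulR (x k) (b k)).trans_eq <|
    Fintype.sum_congr _ _ fun k => Fintype.sum_congr _ _ fun l => ?_
  obtain ⟨S, hS⟩ := hρ.adjointable (star (c k) * c l)
  rw [← hS.symm, hX.inner_smulR_right, hS.symm, hX.inner_smulR_left]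
  rfl

end IsCPAction

lemma IsCPAction.of_sum_inner_nonneg {A B X : Type u} [NonUnitalCStarAlgebra A]
    [NonUnitalCStarAlgebra B] [NormedAddCommGroup X] [NormedSpace ℂ X] [CompleteSpace X]
    {hX : HilbertModule B X} (σ : A →ₗ[ℂ] hX.adjointable)
    (h : ∀ (n : ℕ) (c : Fin n → A) (x : Fin n → X),
      0 ≤ ∑ k, ∑ l, hX.inner (x k) ((σ (star (c k) * c l)).1 (x l))) :
    IsCPAction hX fun a x => (σ a).1 x where
  map_add a a' x := by simp only [_root_.map_add, AddMemClass.coe_add, add_apply]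
  map_smul c a x := by simp only [_root_.map_smul, SetLike.val_smul, smul_apply]
  add_right a := _root_.map_add (σ a).1
  adjointable a := (σ a).2
  pos n M := by
    rintro ⟨N, rfl⟩ x
    have hrows : ∑ i, ∑ j, hX.inner (x i) ((σ ((N.conjTranspose * N) i j)).1 (x j)) =
        ∑ m, ∑ i, ∑ j, hX.inner (x i) ((σ (star (N m i) * N m j)).1 (x j)) := by
      simp only [Matrix.mul_apply, Matrix.conjTranspose_apply, map_sum,
        AddSubmonoidClass.coe_finsetSum, sum_apply, hX.inner_sum_right]
      exact (Finset.sum_congr rfl fun i _ => Finset.sum_comm).trans Finset.sum_comm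
    rw [isPositiveElem_iff_nonneg, hrows]
    exact Finset.sum_nonneg fun m _ => h n (N m) x

namespace TensorData

open HilbertModule

variable {A B C X Y Z : Type u}
  [NonUnitalCStarAlgebra A] [NonUnitalCStarAlgebra B] [NonUnitalCStarAlgebra C]
  [NormedAddCommGroup X] [NormedSpace ℂ X] [CompleteSpace X]
  [NormedAddCommGroup Y] [NormedSpace ℂ Y] [CompleteSpace Y]
  [NormedAddCommGroup Z] [NormedSpace ℂ Z] [CompleteSpace Z]
  {hX : HilbertModule B X} {hY : HilbertModule C Y} {ρ : A → X → X} {φ : B → Y → Y}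
  (TD : TensorData hX hY φ Z) (hφ : IsCorrespondenceAction hY φ)

/-- The map `ρ ⊗ Id` from `A` to `End_C(X ⊗_B Y)`. -/
def rTensorAction (hρ : IsCPAction hX ρ) : A →ₗ[ℂ] TD.str.adjointable :=
  (TD.rTensor hφ).toAlgHom.toLinearMap ∘ₗ hρ.toAdjointable

lemma rTensorAction_mk2 (hρ : IsCPAction hX ρ) (a : A) (x : X) (y : Y) :
    (TD.rTensorAction hφ hρ a).1 (TD.mk2 x y) = TD.mk2 (ρ a x) y :=
  TD.rTensor_mk2 hφ _ x y

lemma sum_inner_rTensorAction_mk2_nonneg (hρ : IsCPAction hX ρ) {ι : Type*} [Fintype ι]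
    (c : ι → A) (x : ι → X) (y : ι → Y) :
    0 ≤ ∑ k, ∑ l, TD.str.inner (TD.mk2 (x k) (y k))
      ((TD.rTensorAction hφ hρ (star (c k) * c l)).1 (TD.mk2 (x l) (y l))) := by
  simp only [rTensorAction_mk2, TD.inner_mk2]
  exact hφ.sum_inner_nonneg (hρ.cstarMatrix_inner_nonneg c x) y

lemma sum_inner_rTensorAction_ofTensorProduct_nonneg (hρ : IsCPAction hX ρ) {ι : Type*} [Fintype ι]
    (c : ι → A) (v : ι → X ⊗[ℂ] Y) :
    0 ≤ ∑ k, ∑ l, TD.str.inner (TD.ofTensorProduct hφ (v k))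
      ((TD.rTensorAction hφ hρ (star (c k) * c l)).1 (TD.ofTensorProduct hφ (v l))) := by
  choose n x y hv using fun k => (v k).exists_sum_tmul_eq
  convert TD.sum_inner_rTensorAction_mk2_nonneg hφ hρ (fun p : Σ k, Fin (n k) => c p.1)
    (fun p => x p.1 p.2) (fun p => y p.1 p.2)
  simp only [Fintype.sum_sigma, hv, map_sum, ofTensorProduct_tmul, TD.str.inner_sum_left,
    TD.str.inner_sum_right]
  exact Finset.sum_congr rfl fun k _ => Finset.sum_comm

lemma sum_inner_rTensorAction_nonneg (hρ : IsCPAction hX ρ) {ι : Type*} [Fintype ι]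
    (c : ι → A) (z : ι → Z) :
    0 ≤ ∑ k, ∑ l, TD.str.inner (z k) ((TD.rTensorAction hφ hρ (star (c k) * c l)).1 (z l)) := by
  have hdense : DenseRange (Pi.map fun _ : ι => TD.ofTensorProduct hφ) :=
    DenseRange.piMap fun _ => TD.denseRange_ofTensorProduct hφ
  have hcont : Continuous fun z : ι → Z => ∑ k, ∑ l,
      TD.str.inner (z k) ((TD.rTensorAction hφ hρ (star (c k) * c l)).1 (z l)) := by
    simp only [← TD.str.innerSL_apply]
    fun_prop
  exact hdense.induction_on (p := fun z => 0 ≤ ∑ k, ∑ l, TD.str.inner (z k)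
    ((TD.rTensorAction hφ hρ (star (c k) * c l)).1 (z l))) z
    (CStarAlgebra.isClosed_nonneg.preimage hcont)
    (TD.sum_inner_rTensorAction_ofTensorProduct_nonneg hφ hρ c)

lemma isCPAction_rTensorAction (hρ : IsCPAction hX ρ) :
    IsCPAction TD.str fun a z => (TD.rTensorAction hφ hρ a).1 z :=
  .of_sum_inner_nonneg _ fun _ => TD.sum_inner_rTensorAction_nonneg hφ hρ

end TensorData

lemma isClosed_setOf_cauchySeq_of_equicontinuous {α β : Type*} [TopologicalSpace α] [UniformSpace β]
    {F : ℕ → α → β} (hF : Equicontinuous F) : IsClosed {x | CauchySeq fun n => F n x} := by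
  refine isClosed_of_closure_subset fun x hx => cauchySeq_iff.2 fun U hU => ?_
  obtain ⟨V, hV, hsymm, hVU⟩ := comp_comp_symm_mem_uniformity_sets hU
  obtain ⟨y, hxy, hy⟩ := mem_closure_iff_nhds.1 hx _ (hF x V hV)
  obtain ⟨N, hN⟩ := cauchySeq_iff.1 hy V hV
  exact ⟨N, fun k hk l hl => hVU ⟨_, ⟨_, hxy k, hN k hk l hl⟩, hsymm.symm _ _ (hxy l)⟩⟩

lemma cauchySeq_apply_of_dense_span {𝕜 V W : Type*} [NontriviallyNormedField 𝕜]
    [SeminormedAddCommGroup V] [NormedSpace 𝕜 V] [SeminormedAddCommGroup W] [NormedSpace 𝕜 W]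
    {s : Set V} (hs : Dense (Submodule.span 𝕜 s : Set V)) {L : ℕ → V →L[𝕜] W}
    (hL : ∃ M, ∀ n, ‖L n‖ ≤ M) (h : ∀ v ∈ s, CauchySeq fun n => L n v) (v : V) :
    CauchySeq fun n => L n v := by
  have hequi : Equicontinuous fun n => ⇑(L n) := ((NormedSpace.equicontinuous_TFAE L).out 5 1).1 hL
  have hclosed := isClosed_setOf_cauchySeq_of_equicontinuous hequi
  refine hclosed.closure_subset_iff.2 (fun w hw => ?_) (hs v)
  induction hw using Submodule.span_induction with
  | mem w hw => exact h w hw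
  | zero => simpa only [Set.mem_ofPred_eq, map_zero] using cauchySeq_const (0 : W)
  | add w w' _ _ hw hw' => simpa only [Set.mem_ofPred_eq, map_add, Pi.add_def] using hw.add hw'
  | smul c w _ hw =>
    simpa only [Set.mem_ofPred_eq, map_smul, Function.comp_def] using
      (uniformContinuous_const_smul c).comp_cauchySeq hw

lemma dense_span_of_forall_exists_clm {R V W : Type*} [Semiring R]
    [TopologicalSpace V] [AddCommMonoid V] [Module R V]
    [TopologicalSpace W] [AddCommMonoid W] [Module R W] [ContinuousAdd W] [ContinuousConstSMul R W]
    {s : Set V} {t u : Set W} (hs : Dense (Submodule.span R s : Set V))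
    (ht : Dense (Submodule.span R t : Set W))
    (h : ∀ w ∈ t, ∃ L : V →L[R] W, w ∈ Set.range L ∧ Set.MapsTo L s u) :
    Dense (Submodule.span R u : Set W) := by
  refine Dense.of_closure <| ht.mono <|
    (Submodule.span_le (p := (Submodule.span R u).topologicalClosure)).2 fun w hw => ?_
  obtain ⟨L, ⟨v, rfl⟩, hL⟩ := h w hw
  have hspan : Submodule.span R s ≤ (Submodule.span R u).comap L.toLinearMap :=
    Submodule.span_le.2 fun x hx => Submodule.subset_span (hL hx)
  exact map_mem_closure L.continuous (hs v) hspan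

namespace HilbertModule

variable {B X Y : Type u} [NonUnitalCStarAlgebra B]
  [NormedAddCommGroup X] [NormedSpace ℂ X] [CompleteSpace X]
  [NormedAddCommGroup Y] [NormedSpace ℂ Y] [CompleteSpace Y]
  (hX : HilbertModule B X) (hY : HilbertModule B Y)

variable {hX} in
lemma adjointable.star_apply_of_isAdjointPair {T : hX.adjointable} {S : X → X}
    (h : IsAdjointPair hX hX T.1 S) (x : X) : (star T).1 x = S x :=
  hX.ext_inner_left fun w => (inner_star_right T w x).trans (h w x)

lemma exists_linearIsometryEquiv_of_inner_eq {ι : Type*} {j : ι → X} {k : ι → Y}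
    (hj : Dense (Submodule.span ℂ (Set.range j) : Set X))
    (hk : Dense (Submodule.span ℂ (Set.range k) : Set Y))
    (h : ∀ i i', hY.inner (k i) (k i') = hX.inner (j i) (j i')) :
    ∃ U : X ≃ₗᵢ[ℂ] Y, (∀ v w, hY.inner (U v) (U w) = hX.inner v w) ∧ ∀ i, U (j i) = k i := by
  let e := Finsupp.linearCombination ℂ j
  let f := Finsupp.linearCombination ℂ k
  have he : DenseRange e := by rwa [← Finsupp.range_linearCombination] at hj
  have hf : DenseRange f := by rwa [← Finsupp.range_linearCombination] at hk
  have hinner : ∀ v w, hY.inner (f v) (f w) = hX.inner (e v) (e w) := fun v w => by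
    simp only [e, f, Finsupp.linearCombination_apply, Finsupp.sum, inner_sum_left,
      inner_sum_right, inner_smulC_left, inner_smulC_right, h]
  have hnorm : ∀ v, ‖f v‖ = ‖e v‖ := fun v => by
    rw [hY.norm_eq_sqrt_norm_inner_self, hX.norm_eq_sqrt_norm_inner_self, hinner]
  let U := (LinearEquiv.refl ℂ (ι →₀ ℂ)).extendOfIsometry e f he hf hnorm
  have hU : ∀ v, U (e v) = f v := LinearEquiv.extendOfIsometry_eq _ e f he hf hnorm
  refine ⟨U, fun v w => ?_, fun i => ?_⟩
  · refine he.induction_on₂ (p := fun v w => hY.inner (U v) (U w) = hX.inner v w) ?_ ?_ v w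
    · simp only [← innerSL_apply]
      exact isClosed_eq (by fun_prop) (by fun_prop)
    · intro v w
      rw [hU, hU, hinner]
  · simpa only [e, f, Finsupp.linearCombination_single, one_smul] using hU (Finsupp.single i 1)

end HilbertModule

namespace TensorData

open HilbertModule

variable {A B C X Y Z : Type u}
  [NonUnitalCStarAlgebra A] [NonUnitalCStarAlgebra B] [NonUnitalCStarAlgebra C]
  [NormedAddCommGroup X] [NormedSpace ℂ X] [CompleteSpace X]
  [NormedAddCommGroup Y] [NormedSpace ℂ Y] [CompleteSpace Y]
  [NormedAddCommGroup Z] [NormedSpace ℂ Z] [CompleteSpace Z]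
  {hX : HilbertModule B X} {hY : HilbertModule C Y} {ρ : A → X → X} {φ : B → Y → Y}
  (TD : TensorData hX hY φ Z) (hφ : IsCorrespondenceAction hY φ)

lemma cauchySeq_rTensor_apply {R : ℕ → hX.adjointable} (hR : ∀ x, CauchySeq fun n => (R n).1 x)
    (z : Z) : CauchySeq fun n => (TD.rTensor hφ (R n)).1 z := by
  obtain ⟨M, hM⟩ : ∃ M, ∀ n, ‖(R n).1‖ ≤ M := banach_steinhaus fun x =>
    (hR x).isBounded_range.exists_norm_le.imp fun _ h n => h _ ⟨n, rfl⟩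
  have hbound : ∀ n, ‖(TD.rTensor hφ (R n)).1‖ ≤ M := fun n =>
    (NonUnitalStarAlgHom.norm_apply_le (TD.rTensor hφ) (R n)).trans (hM n)
  refine cauchySeq_apply_of_dense_span TD.dense_span ⟨M, hbound⟩ (Set.forall_mem_range.2 ?_) z
  rintro ⟨x, y⟩
  simp only [TD.rTensor_mk2]
  exact (TD.mk2L hφ y).uniformContinuous.comp_cauchySeq (hR x)

lemma isStrictAction_rTensorAction (hρ : IsCPAction hX ρ) (hstrict : IsStrictAction hX ρ) :
    IsStrictAction TD.str fun a z => (TD.rTensorAction hφ hρ a).1 z := by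
  obtain ⟨e, he, S, hS, hcauchy⟩ := hstrict
  refine ⟨e, he, fun n => (star (TD.rTensorAction hφ hρ (e n))).1,
    fun n => adjointable.isAdjointPair_star _, fun z => ⟨?_, ?_⟩⟩
  · exact TD.cauchySeq_rTensor_apply hφ (R := fun n => hρ.toAdjointable (e n))
      (fun x => (hcauchy x).1) z
  · have hstar : ∀ x, CauchySeq fun n => (star (hρ.toAdjointable (e n))).1 x := fun x => by
      simpa only [fun n =>
        adjointable.star_apply_of_isAdjointPair (T := hρ.toAdjointable (e n)) (hS n)]
        using (hcauchy x).2
    convert TD.cauchySeq_rTensor_apply hφ hstar z using 4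
    exact (map_star (TD.rTensor hφ) _).symm

end TensorData

namespace KSGNSData

open HilbertModule

variable {A B X E : Type u} [NonUnitalCStarAlgebra A] [NonUnitalCStarAlgebra B]
  [NormedAddCommGroup X] [NormedSpace ℂ X] [CompleteSpace X]
  [NormedAddCommGroup E] [NormedSpace ℂ E] [CompleteSpace E]
  {hX : HilbertModule B X} {ρ : A → X → X} (K : KSGNSData hX ρ E)

lemma dense_span : Dense (Submodule.span ℂ (Set.range fun p : A × X => K.t p.1 p.2) : Set E) :=
  Submodule.dense_iff_topologicalClosure_eq_top.2 K.dense

/-- The operator `x ↦ a ⊗ x`. -/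
def tL (a : A) : X →L[ℂ] E :=
  K.str.clmOfInner K.dense_span (K.t a) (fun p => hX.innerSL (ρ (star a * p.1) p.2)) fun p x => by
    rw [innerSL_apply, ← hX.star_inner, ← K.inner_t, K.str.star_inner]

end KSGNSData

section Unitary

variable {A B C X Y Z E EY E₂ : Type u}
  [NonUnitalCStarAlgebra A] [NonUnitalCStarAlgebra B] [NonUnitalCStarAlgebra C]
  [NormedAddCommGroup X] [NormedSpace ℂ X] [CompleteSpace X]
  [NormedAddCommGroup Y] [NormedSpace ℂ Y] [CompleteSpace Y]
  [NormedAddCommGroup Z] [NormedSpace ℂ Z] [CompleteSpace Z]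
  [NormedAddCommGroup E] [NormedSpace ℂ E] [CompleteSpace E]
  [NormedAddCommGroup EY] [NormedSpace ℂ EY] [CompleteSpace EY]
  [NormedAddCommGroup E₂] [NormedSpace ℂ E₂] [CompleteSpace E₂]
  {hX : HilbertModule B X} {ρ : A → X → X} {hY : HilbertModule C Y} {φ : B → Y → Y}

namespace KSGNSData

variable (K : KSGNSData hX ρ E)

lemma dense_span_mk2_t (hφ : IsCorrespondenceAction hY φ) (TD2 : TensorData K.str hY φ EY) :
    Dense (Submodule.span ℂ
      (Set.range fun i : A × X × Y => TD2.mk2 (K.t i.1 i.2.1) i.2.2) : Set EY) := by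
  refine dense_span_of_forall_exists_clm K.dense_span TD2.dense_span ?_
  rintro _ ⟨⟨e, y⟩, rfl⟩
  refine ⟨TD2.mk2L hφ y, ⟨e, rfl⟩, ?_⟩
  rintro _ ⟨⟨a, x⟩, rfl⟩
  exact ⟨(a, x, y), rfl⟩

lemma dense_span_t_mk2 (TD : TensorData hX hY φ Z) {σ : A → Z → Z} (K₂ : KSGNSData TD.str σ E₂) :
    Dense (Submodule.span ℂ
      (Set.range fun i : A × X × Y => K₂.t i.1 (TD.mk2 i.2.1 i.2.2)) : Set E₂) := by
  refine dense_span_of_forall_exists_clm TD.dense_span K₂.dense_span ?_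
  rintro _ ⟨⟨a, z⟩, rfl⟩
  refine ⟨K₂.tL a, ⟨z, rfl⟩, ?_⟩
  rintro _ ⟨⟨x, y⟩, rfl⟩
  exact ⟨(a, x, y), rfl⟩

lemma apply_mk2_act {W : Type u} [NormedAddCommGroup W] [NormedSpace ℂ W] [CompleteSpace W]
    {hZ : HilbertModule C Z} {σ : A → Z → Z} {f : X → Y → Z} (K₂ : KSGNSData hZ σ W)
    (hφ : IsCorrespondenceAction hY φ) (TD2 : TensorData K.str hY φ EY) (U : EY →L[ℂ] W)
    (hU : ∀ a x y, U (TD2.mk2 (K.t a x) y) = K₂.t a (f x y)) (a : A) (e : E) (y : Y) :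
    U (TD2.mk2 (K.act a e) y) = K₂.act a (U (TD2.mk2 e y)) := by
  have heq : U ∘L TD2.mk2L hφ y ∘L (K.act_adjoint a).toCLM =
      (K₂.act_adjoint a).toCLM ∘L U ∘L TD2.mk2L hφ y := by
    refine ContinuousLinearMap.ext_on K.dense_span (Set.forall_mem_range.2 fun p => ?_)
    change U (TD2.mk2 (K.act a (K.t p.1 p.2)) y) = K₂.act a (U (TD2.mk2 (K.t p.1 p.2) y))
    rw [K.act_t, hU, hU, K₂.act_t]
  exact DFunLike.congr_fun heq e

end KSGNSData

end Unitary

end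

theorem ksgns_tensor_compat_general {A B C X Y XY : Type u}
    [NonUnitalCStarAlgebra A] [NonUnitalCStarAlgebra B] [NonUnitalCStarAlgebra C]
    [NormedAddCommGroup X] [NormedSpace ℂ X] [CompleteSpace X]
    [NormedAddCommGroup Y] [NormedSpace ℂ Y] [CompleteSpace Y]
    [NormedAddCommGroup XY] [NormedSpace ℂ XY] [CompleteSpace XY]
    (hX : HilbertModule B X) (ρ : A → X → X)
    (hcp : IsCPAction hX ρ)
    (hY : HilbertModule C Y) (φ : B → Y → Y) (hφ : IsCorrespondenceAction hY φ)
    (TD : TensorData hX hY φ XY) :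
    (∃ σ : A → XY → XY,
        (∀ (a : A) (x : X) (y : Y), σ a (TD.mk2 x y) = TD.mk2 (ρ a x) y) ∧
        IsCPAction TD.str σ ∧ (IsStrictAction hX ρ → IsStrictAction TD.str σ))
    ∧ (∀ σ : A → XY → XY,
        (∀ (a : A) (x : X) (y : Y), σ a (TD.mk2 x y) = TD.mk2 (ρ a x) y) →
        ∀ (E EY E₂ : Type u)
          [NormedAddCommGroup E] [NormedSpace ℂ E] [CompleteSpace E]
          [NormedAddCommGroup EY] [NormedSpace ℂ EY] [CompleteSpace EY]
          [NormedAddCommGroup E₂] [NormedSpace ℂ E₂] [CompleteSpace E₂]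
          (K : KSGNSData hX ρ E) (TD2 : TensorData K.str hY φ EY)
          (K₂ : KSGNSData TD.str σ E₂),
          ∃ U : EY ≃ₗᵢ[ℂ] E₂,
            (∀ v w : EY, K₂.str.inner (U v) (U w) = TD2.str.inner v w) ∧
            (∀ (a : A) (e : E) (y : Y),
              U (TD2.mk2 (K.act a e) y) = K₂.act a (U (TD2.mk2 e y))) ∧
            (∀ (a : A) (x : X) (y : Y),
              U (TD2.mk2 (K.t a x) y) = K₂.t a (TD.mk2 x y))) := by
  refine ⟨⟨fun a z => (TD.rTensorAction hφ hcp a).1 z, TD.rTensorAction_mk2 hφ hcp,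
    TD.isCPAction_rTensorAction hφ hcp, TD.isStrictAction_rTensorAction hφ hcp⟩,
    fun σ hσ E EY E₂ _ _ _ _ _ _ _ _ _ K TD2 K₂ => ?_⟩
  obtain ⟨U, hinner, hU⟩ := TD2.str.exists_linearIsometryEquiv_of_inner_eq K₂.str
    (K.dense_span_mk2_t hφ TD2) (K₂.dense_span_t_mk2 TD) fun i i' => by
      rw [K₂.inner_t, hσ, TD.inner_mk2, TD2.inner_mk2, K.inner_t]
  have hU_mk2 : ∀ a x y, U (TD2.mk2 (K.t a x) y) = K₂.t a (TD.mk2 x y) :=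
    fun a x y => hU (a, x, y)
  exact ⟨U, hinner, K.apply_mk2_act K₂ hφ TD2 (U : EY →L[ℂ] E₂) hU_mk2, hU_mk2⟩

/-- Let `(ρ, X)` be a strict positive `A`–`B`-correspondence and
`(φ, Y)` a nondegenerate `B`–`C`-correspondence.  Then
`ρ ⊗ Id : A → End_C(X ⊗_B Y)`, `(ρ ⊗ Id)(a)(x ⊗ y) = ρ(a)x ⊗ y`, is a
well-defined strict completely positive map, and there is an isomorphism of
`A`–`C`-correspondences `(A ⊗_ρ X) ⊗_B Y ≅ A ⊗_{ρ⊗Id} (X ⊗_B Y)` intertwining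
the left `A`-actions. -/
theorem ksgns_tensor_compat {A B C X Y XY : Type u}
    [NonUnitalCStarAlgebra A] [NonUnitalCStarAlgebra B] [NonUnitalCStarAlgebra C]
    [NormedAddCommGroup X] [NormedSpace ℂ X] [CompleteSpace X]
    [NormedAddCommGroup Y] [NormedSpace ℂ Y] [CompleteSpace Y]
    [NormedAddCommGroup XY] [NormedSpace ℂ XY] [CompleteSpace XY]
    (hX : HilbertModule B X) (ρ : A → X → X)
    (hcp : IsCPAction hX ρ) (hstrict : IsStrictAction hX ρ)
    (hY : HilbertModule C Y) (φ : B → Y → Y) (hφ : IsCorrespondenceAction hY φ)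
    (hφnd : (Submodule.span ℂ {y : Y | ∃ (b : B) (y' : Y), y = φ b y'}).topologicalClosure = ⊤)
    (TD : TensorData hX hY φ XY) :
    -- `ρ ⊗ Id` is a well-defined strict completely positive map on `X ⊗_B Y`
    (∃ σ : A → XY → XY,
        (∀ (a : A) (x : X) (y : Y), σ a (TD.mk2 x y) = TD.mk2 (ρ a x) y) ∧
        IsCPAction TD.str σ ∧ IsStrictAction TD.str σ)
    -- and the KSGNS module of `ρ ⊗ Id` is `(A ⊗_ρ X) ⊗_B Y`
    ∧ (∀ σ : A → XY → XY,
        (∀ (a : A) (x : X) (y : Y), σ a (TD.mk2 x y) = TD.mk2 (ρ a x) y) →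
        ∀ (E EY E₂ : Type u)
          [NormedAddCommGroup E] [NormedSpace ℂ E] [CompleteSpace E]
          [NormedAddCommGroup EY] [NormedSpace ℂ EY] [CompleteSpace EY]
          [NormedAddCommGroup E₂] [NormedSpace ℂ E₂] [CompleteSpace E₂]
          (K : KSGNSData hX ρ E) (TD2 : TensorData K.str hY φ EY)
          (K₂ : KSGNSData TD.str σ E₂),
          ∃ U : EY → E₂,
            Function.Surjective U ∧
            (∀ v w : EY, U (v + w) = U v + U w) ∧
            (∀ (c : ℂ) (v : EY), U (c • v) = c • U v) ∧
            (∀ v w : EY, K₂.str.inner (U v) (U w) = TD2.str.inner v w) ∧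
            -- `U` intertwines the left `A`-actions
            (∀ (a : A) (e : E) (y : Y),
              U (TD2.mk2 (K.act a e) y) = K₂.act a (U (TD2.mk2 e y))) ∧
            -- `U` sends `(a ⊗ x) ⊗ y` to `a ⊗ (x ⊗ y)`
            (∀ (a : A) (x : X) (y : Y),
              U (TD2.mk2 (K.t a x) y) = K₂.t a (TD.mk2 x y))) := by
  refine (ksgns_tensor_compat_general hX ρ hcp hY φ hφ TD).imp
    (.imp fun σ h => ⟨h.1, h.2.1, h.2.2 hstrict⟩)
    fun h σ hσ E EY E₂ _ _ _ _ _ _ _ _ _ K TD2 K₂ => ?_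
  obtain ⟨U, hU⟩ := h σ hσ E EY E₂ K TD2 K₂
  exact ⟨U, U.surjective, map_add U, map_smul U, hU⟩
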